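/- Let m ≥ 4 be an integer and let p be a real number with 2m ≤ p < ∞. If D > 0 is such that for every n ≥ 1 and every m-homogeneous polynomial P(x) = ∑_{|α|=m} a_α x^α on the real space ℓ_p^n one has (∑_{|α|=m} |a_α|^{2mp/(mp+p−2m)})^{(mp+p−2m)/(2mp)} ≤ D·‖P‖, then D ≥ (2^{1/4})^{m − 1/m}. -/

import Mathlib

open Finset

/-- The `ℓ_p` norm on `ℝ^n` for a real exponent `p`. -/
noncomputable def lpNorm {n : ℕ} (p : ℝ) (x : Fin n → ℝ) : ℝ :=
  (∑ i, |x i| ^ p) ^ (1 / p)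

/-- The sup norm of the `m`-homogeneous polynomial with coefficients `a`
over the unit ball of the real space `ℓ_p^n`. -/
noncomputable def polyNorm (p : ℝ) (m n : ℕ) (a : (Fin n → ℕ) → ℝ) : ℝ :=
  sSup {y : ℝ | ∃ x : Fin n → ℝ, lpNorm p x ≤ 1 ∧
    y = |∑ α ∈ Finset.Nat.antidiagonalTuple n m, a α * ∏ i, x i ^ α i|}

/-!
Test the inequality on the bivariate polynomial `x ^ (m - 2 * k) * (x ^ 2 - y ^ 2) ^ k` with
`k = ⌊m / 2⌋`. It is bounded by `1` on the square `[-1, 1]²`, which contains every `ℓ_p` ball,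
while its coefficients are signed binomial coefficients, with sum of squares
`∑ j, (k.choose j) ^ 2 = k.centralBinom`. The Hardy–Littlewood exponent is at most `2` when
`2 * m ≤ p`, so the left-hand side dominates the `ℓ_2` norm of the coefficients and
`√k.centralBinom ≤ D`. Finally `2 ^ m ≤ k.centralBinom ^ 2` as soon as `4 ≤ m`.
-/

section SequenceNorms

variable {ι : Type*}

lemma sum_rpow_le_rpow_sum {t : ℝ} (ht : 1 ≤ t) (s : Finset ι) {f : ι → ℝ}
    (hf : ∀ i ∈ s, 0 ≤ f i) : ∑ i ∈ s, f i ^ t ≤ (∑ i ∈ s, f i) ^ t := by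
  classical
  induction s using Finset.induction_on with
  | empty => simp [Real.zero_rpow (zero_lt_one.trans_le ht).ne']
  | insert i s hi ih =>
    rw [forall_mem_insert] at hf
    rw [sum_insert hi, sum_insert hi]
    calc f i ^ t + ∑ j ∈ s, f j ^ t
        ≤ f i ^ t + (∑ j ∈ s, f j) ^ t := by grw [ih hf.2]
      _ ≤ (f i + ∑ j ∈ s, f j) ^ t :=
        Real.add_rpow_le_rpow_add hf.1 (sum_nonneg hf.2) ht

lemma rpow_sum_abs_rpow_anti {r q : ℝ} (hr : 0 < r) (hrq : r ≤ q) (s : Finset ι) (a : ι → ℝ) :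
    (∑ i ∈ s, |a i| ^ q) ^ (1 / q) ≤ (∑ i ∈ s, |a i| ^ r) ^ (1 / r) := by
  have hq : 0 < q := hr.trans_le hrq
  have hnonneg : ∀ i ∈ s, 0 ≤ |a i| ^ r := fun i _ => by positivity
  calc (∑ i ∈ s, |a i| ^ q) ^ (1 / q)
      = (∑ i ∈ s, (|a i| ^ r) ^ (q / r)) ^ (1 / q) := by
        simp only [← Real.rpow_mul (abs_nonneg _), mul_div_cancel₀ q hr.ne']
    _ ≤ ((∑ i ∈ s, |a i| ^ r) ^ (q / r)) ^ (1 / q) := by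
        gcongr
        exact sum_rpow_le_rpow_sum ((one_le_div hr).2 hrq) s hnonneg
    _ = (∑ i ∈ s, |a i| ^ r) ^ (1 / r) := by
        rw [← Real.rpow_mul (sum_nonneg hnonneg)]
        congr 1
        field_simp

lemma sqrt_sum_sq_le_rpow_sum_abs_rpow {r : ℝ} (hr : 0 < r) (hr2 : r ≤ 2) (s : Finset ι)
    (a : ι → ℝ) : √(∑ i ∈ s, a i ^ 2) ≤ (∑ i ∈ s, |a i| ^ r) ^ (1 / r) := by
  simpa [Real.sqrt_eq_rpow] using rpow_sum_abs_rpow_anti hr hr2 s a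

end SequenceNorms

section PolynomialNorm

variable {n : ℕ} {p : ℝ}

lemma abs_apply_le_lpNorm (hp : 0 < p) (x : Fin n → ℝ) (i : Fin n) : |x i| ≤ lpNorm p x := by
  calc |x i| = (|x i| ^ p) ^ (1 / p) := by
        rw [one_div, Real.rpow_rpow_inv (abs_nonneg _) hp.ne']
    _ ≤ lpNorm p x := by
        unfold lpNorm
        gcongr
        exact single_le_sum (f := fun j => |x j| ^ p) (fun j _ => by positivity) (mem_univ i)

lemma polyNorm_nonneg (p : ℝ) (m n : ℕ) (a : (Fin n → ℕ) → ℝ) : 0 ≤ polyNorm p m n a := by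
  apply Real.sSup_nonneg
  rintro _ ⟨x, -, rfl⟩
  exact abs_nonneg _

lemma polyNorm_le_of_forall_abs_le_one (hp : 0 < p) {m : ℕ} {a : (Fin n → ℕ) → ℝ} {C : ℝ}
    (hC : 0 ≤ C) (hbound : ∀ x : Fin n → ℝ, (∀ i, |x i| ≤ 1) →
      |∑ α ∈ Finset.Nat.antidiagonalTuple n m, a α * ∏ i, x i ^ α i| ≤ C) :
    polyNorm p m n a ≤ C := by
  apply Real.sSup_le _ hC
  rintro _ ⟨x, hx, rfl⟩
  exact hbound x fun i => (abs_apply_le_lpNorm hp x i).trans hx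

end PolynomialNorm

section ExtremalPolynomial

/-- The coefficients of the homogeneous polynomial `x ^ (m - 2 * k) * (x ^ 2 - y ^ 2) ^ k`, where
`α 1` is the exponent of `y`. The degree `m` does not appear: it only fixes `α 0 = m - α 1`. -/
def sqSubSqPowCoeff (k : ℕ) (α : Fin 2 → ℕ) : ℝ :=
  if Even (α 1) then (-1) ^ (α 1 / 2) * k.choose (α 1 / 2) else 0

lemma sqSubSqPowCoeff_two_mul (k i j : ℕ) :
    sqSubSqPowCoeff k ![i, 2 * j] = (-1) ^ j * k.choose j := by
  simp [sqSubSqPowCoeff]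

lemma sqSubSqPowCoeff_eq_zero {k : ℕ} {α : Fin 2 → ℕ} (hα : ∀ j ≤ k, α 1 ≠ 2 * j) :
    sqSubSqPowCoeff k α = 0 := by
  unfold sqSubSqPowCoeff
  split_ifs with heven
  · have hlt : k < α 1 / 2 := not_le.1 fun hle => hα _ hle (Nat.two_mul_div_two_of_even heven).symm
    simp [Nat.choose_eq_zero_of_lt hlt]
  · rfl

lemma sum_antidiagonalTuple_two_eq_sum_range {M : Type*} [AddCommMonoid M] {m k : ℕ}
    (hk : 2 * k ≤ m) {F : (Fin 2 → ℕ) → M} (hF : ∀ α, (∀ j ≤ k, α 1 ≠ 2 * j) → F α = 0) :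
    ∑ α ∈ Finset.Nat.antidiagonalTuple 2 m, F α
      = ∑ j ∈ range (k + 1), F ![m - 2 * j, 2 * j] := by
  symm
  apply sum_of_injOn (fun j => ![m - 2 * j, 2 * j])
  · intro i _ j _ hij
    simpa using congrFun hij 1
  · intro j hj
    have hjk : j < k + 1 := by simpa using hj
    simp only [mem_coe, Finset.Nat.mem_antidiagonalTuple, Fin.sum_univ_two, Matrix.cons_val_zero,
      Matrix.cons_val_one]
    omega
  · intro α hα hnotMem
    refine hF α fun j hj hαj => hnotMem ⟨j, by simpa [Nat.lt_succ_iff] using hj, ?_⟩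
    rw [Finset.Nat.mem_antidiagonalTuple, Fin.sum_univ_two] at hα
    ext i
    fin_cases i <;> simp <;> omega
  · exact fun _ _ => rfl

variable {m k : ℕ}

lemma sum_sqSubSqPowCoeff_mul_prod_pow (hk : 2 * k ≤ m) (x : Fin 2 → ℝ) :
    ∑ α ∈ Finset.Nat.antidiagonalTuple 2 m, sqSubSqPowCoeff k α * ∏ i, x i ^ α i
      = x 0 ^ (m - 2 * k) * (x 0 ^ 2 - x 1 ^ 2) ^ k := by
  rw [sum_antidiagonalTuple_two_eq_sum_range hk fun α hα => by simp [sqSubSqPowCoeff_eq_zero hα],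
    sub_eq_neg_add, add_pow, mul_sum]
  refine sum_congr rfl fun j hj => ?_
  have hdeg : m - 2 * j = (m - 2 * k) + 2 * (k - j) := by
    have := mem_range.1 hj
    omega
  rw [sqSubSqPowCoeff_two_mul, Fin.prod_univ_two, Matrix.cons_val_zero, Matrix.cons_val_one,
    Matrix.cons_val_fin_one, hdeg, pow_add, pow_mul, pow_mul, neg_pow (x 1 ^ 2)]
  ring

lemma sum_sq_sqSubSqPowCoeff (hk : 2 * k ≤ m) :
    ∑ α ∈ Finset.Nat.antidiagonalTuple 2 m, sqSubSqPowCoeff k α ^ 2 = k.centralBinom := by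
  rw [sum_antidiagonalTuple_two_eq_sum_range hk fun α hα => by simp [sqSubSqPowCoeff_eq_zero hα],
    Nat.centralBinom, ← Nat.sum_range_choose_sq, Nat.cast_sum]
  refine sum_congr rfl fun j _ => ?_
  rw [sqSubSqPowCoeff_two_mul, mul_pow, ← pow_mul, pow_mul', neg_one_sq, one_pow, one_mul,
    Nat.cast_pow]

lemma abs_pow_mul_sq_sub_sq_pow_le_one {u v : ℝ} (hu : |u| ≤ 1) (hv : |v| ≤ 1) (i k : ℕ) :
    |u ^ i * (u ^ 2 - v ^ 2) ^ k| ≤ 1 := by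
  have hu2 : u ^ 2 ≤ 1 := (sq_le_one_iff_abs_le_one u).2 hu
  have hv2 : v ^ 2 ≤ 1 := (sq_le_one_iff_abs_le_one v).2 hv
  have hdiff : |u ^ 2 - v ^ 2| ≤ 1 :=
    abs_sub_le_of_nonneg_of_le (sq_nonneg u) hu2 (sq_nonneg v) hv2
  rw [abs_mul, abs_pow, abs_pow]
  exact mul_le_one₀ (pow_le_one₀ (abs_nonneg _) hu) (by positivity)
    (pow_le_one₀ (abs_nonneg _) hdiff)

lemma polyNorm_sqSubSqPowCoeff_le_one {p : ℝ} (hp : 0 < p) (hk : 2 * k ≤ m) :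
    polyNorm p m 2 (sqSubSqPowCoeff k) ≤ 1 := by
  refine polyNorm_le_of_forall_abs_le_one hp zero_le_one fun x hx => ?_
  rw [sum_sqSubSqPowCoeff_mul_prod_pow hk]
  exact abs_pow_mul_sq_sub_sq_pow_le_one (hx 0) (hx 1) _ _

end ExtremalPolynomial

section CentralBinomialGrowth

lemma two_mul_centralBinom_le_centralBinom_succ (k : ℕ) :
    2 * k.centralBinom ≤ (k + 1).centralBinom := by
  refine Nat.le_of_mul_le_mul_left ?_ k.succ_pos
  calc (k + 1) * (2 * k.centralBinom)
      ≤ 2 * (2 * k + 1) * k.centralBinom := by nlinarith [k.centralBinom_pos]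
    _ = (k + 1) * (k + 1).centralBinom := (Nat.succ_mul_centralBinom_succ k).symm

lemma two_mul_four_pow_le_centralBinom_sq {k : ℕ} (hk : 2 ≤ k) :
    2 * 4 ^ k ≤ k.centralBinom ^ 2 := by
  induction k, hk using Nat.le_induction with
  | base => decide
  | succ k _ ih =>
    calc 2 * 4 ^ (k + 1) = 2 ^ 2 * (2 * 4 ^ k) := by ring
      _ ≤ 2 ^ 2 * k.centralBinom ^ 2 := by gcongr
      _ = (2 * k.centralBinom) ^ 2 := (mul_pow _ _ _).symm
      _ ≤ (k + 1).centralBinom ^ 2 := by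
        gcongr
        exact two_mul_centralBinom_le_centralBinom_succ k

lemma two_pow_le_centralBinom_half_sq {m : ℕ} (hm : 4 ≤ m) :
    2 ^ m ≤ (m / 2).centralBinom ^ 2 := by
  calc 2 ^ m ≤ 2 ^ (2 * (m / 2) + 1) := by gcongr <;> omega
    _ = 2 * 4 ^ (m / 2) := by rw [pow_succ', pow_mul]; norm_num
    _ ≤ (m / 2).centralBinom ^ 2 := two_mul_four_pow_le_centralBinom_sq (by omega)

lemma fourth_root_two_rpow_le_sqrt_centralBinom {m : ℕ} (hm : 4 ≤ m) :
    ((2 : ℝ) ^ ((1 : ℝ) / 4)) ^ ((m : ℝ) - 1 / m) ≤ √(m / 2).centralBinom := by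
  have hroot : (1 : ℝ) ≤ 2 ^ ((1 : ℝ) / 4) := Real.one_le_rpow one_le_two (by norm_num)
  have hexp : (m : ℝ) - 1 / m ≤ m := sub_le_self _ (by positivity)
  have hgrowth : (2 : ℝ) ^ m ≤ (m / 2).centralBinom ^ 2 := by
    exact_mod_cast two_pow_le_centralBinom_half_sq hm
  calc ((2 : ℝ) ^ ((1 : ℝ) / 4)) ^ ((m : ℝ) - 1 / m)
      ≤ ((2 : ℝ) ^ ((1 : ℝ) / 4)) ^ (m : ℝ) := Real.rpow_le_rpow_of_exponent_le hroot hexp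
    _ = ((2 : ℝ) ^ m) ^ ((1 : ℝ) / 4) := by
        rw [Real.rpow_natCast, Real.rpow_pow_comm zero_le_two]
    _ ≤ (((m / 2).centralBinom : ℝ) ^ 2) ^ ((1 : ℝ) / 4) := by gcongr
    _ = √(m / 2).centralBinom := by
        rw [← Real.rpow_natCast_mul (Nat.cast_nonneg _), Real.sqrt_eq_rpow]
        norm_num

end CentralBinomialGrowth

lemma hardyLittlewood_exponent_mem_Ioc {m p : ℝ} (hm : 0 < m) (hp : 2 * m ≤ p) :
    2 * m * p / (m * p + p - 2 * m) ∈ Set.Ioc 0 2 := by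
  have hp0 : 0 < p := by linarith
  have hden : 0 < m * p + p - 2 * m := by nlinarith
  exact ⟨by positivity, (div_le_iff₀ hden).2 (by linarith)⟩

theorem real_HL_lower_bound_fourth_root_general {m : ℕ} {p r D : ℝ} (hp : 0 < p) (hr : 0 < r)
    (hr2 : r ≤ 2) (h : ∀ a : (Fin 2 → ℕ) → ℝ,
      (∑ α ∈ Finset.Nat.antidiagonalTuple 2 m, |a α| ^ r) ^ (1 / r) ≤ D * polyNorm p m 2 a) :
    √(m / 2).centralBinom ≤ D := by
  set a := sqSubSqPowCoeff (m / 2)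
  have hk : 2 * (m / 2) ≤ m := Nat.mul_div_le m 2
  have hle : √(m / 2).centralBinom ≤ D * polyNorm p m 2 a := by
    rw [← sum_sq_sqSubSqPowCoeff hk]
    exact (sqrt_sum_sq_le_rpow_sum_abs_rpow hr hr2 _ a).trans (h a)
  have hpos : 0 < √((m / 2).centralBinom : ℝ) :=
    Real.sqrt_pos.2 (Nat.cast_pos.2 (Nat.centralBinom_pos _))
  have hD : 0 < D := pos_of_mul_pos_left (hpos.trans_le hle) (polyNorm_nonneg p m 2 a)
  exact hle.trans (mul_le_of_le_one_right hD.le (polyNorm_sqSubSqPowCoeff_le_one hp hk))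

/-- For `m ≥ 4` and `2m ≤ p < ∞`, any constant `D` for the real polynomial
Hardy–Littlewood inequality satisfies `D ≥ (2^{1/4})^{m - 1/m}`. -/
theorem real_HL_lower_bound_fourth_root (m : ℕ) (hm : 4 ≤ m)
    (p : ℝ) (hp : 2 * (m : ℝ) ≤ p) (D : ℝ) (hD : 0 < D)
    (h : ∀ n : ℕ, 1 ≤ n → ∀ a : (Fin n → ℕ) → ℝ,
      (∑ α ∈ Finset.Nat.antidiagonalTuple n m, |a α|
          ^ (2 * (m : ℝ) * p / ((m : ℝ) * p + p - 2 * m)))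
        ^ (((m : ℝ) * p + p - 2 * m) / (2 * (m : ℝ) * p)) ≤ D * polyNorm p m n a) :
    ((2 : ℝ) ^ ((1 : ℝ) / 4)) ^ ((m : ℝ) - 1 / m) ≤ D := by
  have hm0 : (0 : ℝ) < m := Nat.cast_pos.2 (by omega)
  obtain ⟨hr, hr2⟩ := hardyLittlewood_exponent_mem_Ioc hm0 hp
  refine (fourth_root_two_rpow_le_sqrt_centralBinom hm).trans <|
    real_HL_lower_bound_fourth_root_general (p := p) (by linarith) hr hr2 fun a => ?_
  simpa only [one_div_div] using h 2 one_le_two a
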